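/- Let R be a local complete intersection and M, N finitely generated R-modules. If Tor_i^R(M,N) is a torsion R-module for all sufficiently large i, then Tor_i^R(M,N) is torsion for all i ≥ 1. -/

import Mathlib

open RingTheory.Sequence CategoryTheory

universe u

noncomputable section

/-- Depth of a module: supremum of lengths of weakly regular sequences consisting of nonunits.
For a f.g. module over a noetherian local ring this is the usual depth, and the zero module
has depth `⊤`. -/
def rdepth (A : Type u) [CommRing A] (M : Type u) [AddCommGroup M] [Module A M] : ℕ∞ :=
  sSup {n : ℕ∞ | ∃ rs : List A, (rs.length : ℕ∞) = n ∧ (∀ r ∈ rs, r ∈ nonunits A) ∧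
    RingTheory.Sequence.IsWeaklyRegular M rs}

/-- Serre's condition `(S_n)`. -/
def SerreCond (R : Type u) [CommRing R] (M : Type u) [AddCommGroup M] [Module R M] (n : ℕ) :
    Prop :=
  ∀ (p : Ideal R) (hp : p.IsPrime), Nontrivial (LocalizedModule p.primeCompl M) →
    min (n : ℕ∞) (Order.height (⟨p, hp⟩ : PrimeSpectrum R)) ≤
      rdepth (Localization.AtPrime p) (LocalizedModule p.primeCompl M)

/-- `Tor_i^R(M, N)` as an object of `ModuleCat R`. -/
def TorModCat (R : Type u) [CommRing R] (i : ℕ) (M N : Type u) [AddCommGroup M] [Module R M]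
    [AddCommGroup N] [Module R N] : ModuleCat.{u} R :=
  ((Tor (ModuleCat.{u} R) i).obj (ModuleCat.of R M)).obj (ModuleCat.of R N)

/-- `Tor_i^R(M, N)` as a type (with its `R`-module structure given by instances below). -/
def TorM (R : Type u) [CommRing R] (i : ℕ) (M N : Type u) [AddCommGroup M] [Module R M]
    [AddCommGroup N] [Module R N] : Type u :=
  TorModCat R i M N

instance (R : Type u) [CommRing R] (i : ℕ) (M N : Type u) [AddCommGroup M] [Module R M]
    [AddCommGroup N] [Module R N] : AddCommGroup (TorM R i M N) :=
  inferInstanceAs (AddCommGroup (TorModCat R i M N))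

instance (R : Type u) [CommRing R] (i : ℕ) (M N : Type u) [AddCommGroup M] [Module R M]
    [AddCommGroup N] [Module R N] : Module R (TorM R i M N) :=
  inferInstanceAs (Module R (TorModCat R i M N))

/-- A regular local ring: noetherian local, whose maximal ideal is generated by a
(weakly) regular sequence. -/
def IsRegLocal (Q : Type u) [CommRing Q] : Prop :=
  IsNoetherianRing Q ∧ IsLocalRing Q ∧
    ∃ rs : List Q, RingTheory.Sequence.IsWeaklyRegular Q rs ∧ (∀ r ∈ rs, r ∈ nonunits Q) ∧
      Ideal.span {x | x ∈ rs} = Ideal.span (nonunits Q)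

/-- A (local) complete intersection: noetherian local ring whose completion is a regular
local ring modulo a regular sequence (of nonunits). -/
def IsCIRing (R : Type u) [CommRing R] : Prop :=
  IsNoetherianRing R ∧ IsLocalRing R ∧
    ∃ (Q : Type u) (_ : CommRing Q), IsRegLocal Q ∧
      ∃ rs : List Q, (∀ r ∈ rs, r ∈ nonunits Q) ∧ RingTheory.Sequence.IsWeaklyRegular Q rs ∧
        Nonempty ((Q ⧸ Ideal.span {x | x ∈ rs}) ≃+* AdicCompletion (Ideal.span (nonunits R)) R)

/-- A hypersurface: noetherian local ring whose completion is a regular local ring modulo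
a single non-zerodivisor in the maximal ideal. -/
def IsHypersurfaceRing (R : Type u) [CommRing R] : Prop :=
  IsNoetherianRing R ∧ IsLocalRing R ∧
    ∃ (Q : Type u) (_ : CommRing Q), IsRegLocal Q ∧
      ∃ f : Q, f ∈ nonunits Q ∧ f ∈ nonZeroDivisors Q ∧
        Nonempty ((Q ⧸ Ideal.span {f}) ≃+* AdicCompletion (Ideal.span (nonunits R)) R)

/-- Maximal Cohen-Macaulay module over a local ring: depth equals the Krull dimension. -/
def IsMCM (R : Type u) [CommRing R] (M : Type u) [AddCommGroup M] [Module R M] : Prop :=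
  (rdepth R M : WithBot ℕ∞) = ringKrullDim R

/-- Cohen-Macaulay local ring. -/
def IsCMLocalRing (A : Type u) [CommRing A] : Prop :=
  IsNoetherianRing A ∧ IsLocalRing A ∧ (rdepth A A : WithBot ℕ∞) = ringKrullDim A

/-- `M` has (constant) rank: free of the same rank at every minimal prime. -/
def HasRank (R : Type u) [CommRing R] (M : Type u) [AddCommGroup M] [Module R M] : Prop :=
  ∃ r : ℕ, ∀ (p : Ideal R) (hp : p.IsPrime), p ∈ minimalPrimes R →
    Nonempty ((LocalizedModule (@Ideal.primeCompl R _ p hp) M)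
      ≃ₗ[Localization (@Ideal.primeCompl R _ p hp)]
      (Fin r → Localization (@Ideal.primeCompl R _ p hp)))

/-- Projective dimension at most `n`. -/
def pdLE (R : Type u) [CommRing R] : ℕ → ∀ (M : Type u) [AddCommGroup M] [Module R M], Prop
  | 0, M, _, _ => Module.Projective R M
  | n+1, M, _, _ => ∃ (P : Type u) (_ : AddCommGroup P) (_ : Module R P),
      Module.Projective R P ∧ ∃ f : P →ₗ[R] M, Function.Surjective f ∧
        pdLE R n (LinearMap.ker f)

/-- Injective dimension at most `n`. -/
def idLE (R : Type u) [CommRing R] : ℕ → ∀ (M : Type u) [AddCommGroup M] [Module R M], Prop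
  | 0, M, _, _ => Module.Injective R M
  | n+1, M, _, _ => ∃ (I : Type u) (_ : AddCommGroup I) (_ : Module R I),
      Module.Injective R I ∧ ∃ f : M →ₗ[R] I, Function.Injective f ∧
        idLE R n (I ⧸ LinearMap.range f)

/-- Gorenstein local ring: noetherian local with finite self-injective dimension. -/
def IsGorensteinLocalRing (R : Type u) [CommRing R] : Prop :=
  IsNoetherianRing R ∧ IsLocalRing R ∧ ∃ n : ℕ, idLE R n R

/-- The map `M → R^ν` obtained from a free cover `ε : R^ν ↠ M^*` by dualizing and composing
with the biduality map; its cokernel is the pushforward `M₁`. -/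
def pushMap (R M : Type u) [CommRing R] [AddCommGroup M] [Module R M] {ν : ℕ}
    (ε : (Fin ν → R) →ₗ[R] Module.Dual R M) : M →ₗ[R] (Fin ν → R) where
  toFun m := fun i => ε (Pi.single i 1) m
  map_add' x y := by funext i; simp
  map_smul' r x := by funext i; simp

/-- Length of a module, as the Krull dimension of its lattice of submodules. -/
def mlen (R : Type u) [CommRing R] (M : Type u) [AddCommGroup M] [Module R M] :
    WithBot ℕ∞ :=
  Order.krullDim (Submodule R M)

/-- An unramified regular local ring: equicharacteristic (contains a field), or of mixed
characteristic `(0, p)` with `p` not in the square of the maximal ideal. -/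
def IsUnramifiedRegLocal (Q : Type u) [CommRing Q] : Prop :=
  IsRegLocal Q ∧
    ((∃ (K : Type u) (_ : Field K), Nonempty (K →+* Q)) ∨
     (CharZero Q ∧ ∃ p : ℕ, p.Prime ∧ (p : Q) ∈ nonunits Q ∧
        (p : Q) ∉ (Ideal.span (nonunits Q)) ^ 2))

/-- The canonical free cover. -/
def FreeT (A : Type u) [CommRing A] (N : Type u) : Type u := N →₀ A

instance (A : Type u) [CommRing A] (N : Type u) : AddCommGroup (FreeT A N) :=
  inferInstanceAs (AddCommGroup (N →₀ A))

instance (A : Type u) [CommRing A] (N : Type u) : Module A (FreeT A N) :=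
  inferInstanceAs (Module A (N →₀ A))

instance (A : Type u) [CommRing A] (N : Type u) : Module.Free A (FreeT A N) :=
  inferInstanceAs (Module.Free A (N →₀ A))

/-- The canonical surjection. -/
def syzP (A : Type u) [CommRing A] (N : Type u) [AddCommGroup N] [Module A N] :
    FreeT A N →ₗ[A] N :=
  (Finsupp.linearCombination A (id : N → N) : (N →₀ A) →ₗ[A] N)

/-- Canonical first syzygy. -/
def Syz (A : Type u) [CommRing A] (N : Type u) [AddCommGroup N] [Module A N] : Type u :=
  LinearMap.ker (syzP A N)

instance (A : Type u) [CommRing A] (N : Type u) [AddCommGroup N] [Module A N] :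
    AddCommGroup (Syz A N) :=
  inferInstanceAs (AddCommGroup (LinearMap.ker (syzP A N)))

instance (A : Type u) [CommRing A] (N : Type u) [AddCommGroup N] [Module A N] :
    Module A (Syz A N) :=
  inferInstanceAs (Module A (LinearMap.ker (syzP A N)))

/-- The inclusion of the syzygy. -/
def syzI (A : Type u) [CommRing A] (N : Type u) [AddCommGroup N] [Module A N] :
    Syz A N →ₗ[A] FreeT A N :=
  (LinearMap.ker (syzP A N)).subtype

/-- `TV A n M N` says `Tor_{n+1}^A(M,N) = 0`. -/
def TV (A : Type u) [CommRing A] : ℕ → ∀ (M N : Type u) [AddCommGroup M] [Module A M]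
    [AddCommGroup N] [Module A N], Prop
  | 0, M, N, _, _, _, _ => Function.Injective ((syzI A N).lTensor M)
  | n+1, M, N, _, _, _, _ => TV A n M (Syz A N)

section TVtheory

open TensorProduct Function

variable {A : Type u} [CommRing A]
variable {M M' M'' N K F L G : Type u} [AddCommGroup M] [Module A M] [AddCommGroup N] [Module A N]
  [AddCommGroup M'] [Module A M'] [AddCommGroup M''] [Module A M'']
  [AddCommGroup K] [Module A K] [AddCommGroup F] [Module A F]
  [AddCommGroup L] [Module A L] [AddCommGroup G] [Module A G]

lemma TV_zero : TV A 0 M N ↔ Injective ((syzI A N).lTensor M) := by rw [TV]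

lemma TV_succ (n : ℕ) : TV A (n+1) M N ↔ TV A n M (Syz A N) := by rw [TV]

lemma syz_surj (A : Type u) [CommRing A] (N : Type u) [AddCommGroup N] [Module A N] :
    Surjective (syzP A N) := by
  intro x
  exact ⟨(Finsupp.single x 1 : N →₀ A), (Finsupp.linearCombination_single A 1 x).trans (one_smul A x)⟩

lemma syz_exact (A : Type u) [CommRing A] (N : Type u) [AddCommGroup N] [Module A N] :
    Exact (syzI A N) (syzP A N) :=
  LinearMap.exact_subtype_ker_map _

lemma syz_inj (A : Type u) [CommRing A] (N : Type u) [AddCommGroup N] [Module A N] :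
    Injective (syzI A N) := Subtype.val_injective

/-- 3x3 symmetric transfer. -/
lemma inj_swap {l : L →ₗ[A] G} {p : G →ₗ[A] M} (hlp : Exact l p) (hp : Surjective p)
    {k : K →ₗ[A] F} {q : F →ₗ[A] N} (hkq : Exact k q) (hq : Surjective q) (hk : Injective k)
    [Module.Flat A G] (h : Injective (l.lTensor N)) : Injective (k.lTensor M) :=
  lTensor_injective_of_exact_of_exact_of_rTensor_injective hlp hp hkq hq
    ((LinearMap.lTensor_inj_iff_rTensor_inj _ _).mp h)
    (Module.Flat.lTensor_preserves_injective_linearMap _ hk)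

lemma TV0_symm (h : TV A 0 M N) : TV A 0 N M := by
  rw [TV_zero] at h ⊢
  exact inj_swap (syz_exact A N) (syz_surj A N) (syz_exact A M) (syz_surj A M) (syz_inj A M) h

lemma TV0_comm : TV A 0 M N ↔ TV A 0 N M := ⟨TV0_symm, TV0_symm⟩

lemma TV0_inj (h : TV A 0 M N) {k : K →ₗ[A] F} {q : F →ₗ[A] N} (hkq : Exact k q)
    (hq : Surjective q) (hk : Injective k) : Injective (k.lTensor M) := by
  have h := TV0_symm h
  rw [TV_zero] at h
  exact inj_swap (syz_exact A M) (syz_surj A M) hkq hq hk h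

lemma TV0_of_inj [Module.Flat A F] {k : K →ₗ[A] F} {q : F →ₗ[A] N} (hkq : Exact k q)
    (hq : Surjective q) (h : Injective (k.lTensor M)) : TV A 0 M N := by
  apply TV0_symm
  rw [TV_zero]
  exact inj_swap hkq hq (syz_exact A M) (syz_surj A M) (syz_inj A M) h

/-- both sides express injectivity of `L ⊗ K → G ⊗ F`. -/
lemma TV0_shift_aux [Module.Flat A F] [Module.Flat A G]
    {l : L →ₗ[A] G} {p : G →ₗ[A] M} (hlp : Exact l p) (hp : Surjective p) (hl : Injective l)
    {k : K →ₗ[A] F} {q : F →ₗ[A] N} (hkq : Exact k q) (hq : Surjective q) (hk : Injective k)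
    (h : TV A 0 M K) : TV A 0 L N := by
  refine TV0_of_inj hkq hq ?_
  have h1 : Injective (l.rTensor K) :=
    (LinearMap.lTensor_inj_iff_rTensor_inj _ _).mp (TV0_inj (TV0_symm h) hlp hp hl)
  have h2 : Injective (k.lTensor G) := Module.Flat.lTensor_preserves_injective_linearMap _ hk
  have h3 : Injective ((l.rTensor F).comp (k.lTensor L)) := by
    rw [LinearMap.rTensor_comp_lTensor, ← LinearMap.lTensor_comp_rTensor]
    exact h2.comp h1
  exact Injective.of_comp h3

lemma TV0_shift [Module.Flat A F] [Module.Flat A G]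
    {l : L →ₗ[A] G} {p : G →ₗ[A] M} (hlp : Exact l p) (hp : Surjective p) (hl : Injective l)
    {k : K →ₗ[A] F} {q : F →ₗ[A] N} (hkq : Exact k q) (hq : Surjective q) (hk : Injective k) :
    TV A 0 M K ↔ TV A 0 L N :=
  ⟨TV0_shift_aux hlp hp hl hkq hq hk,
    fun h => TV0_symm (TV0_shift_aux hkq hq hk hlp hp hl (TV0_symm h))⟩

/-- Shift in the first variable. -/
lemma TV_shift_left (n : ℕ) [Module.Flat A G] {l : L →ₗ[A] G} {p : G →ₗ[A] M} (hlp : Exact l p)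
    (hp : Surjective p) (hl : Injective l) : TV A (n+1) M N ↔ TV A n L N := by
  induction n generalizing N with
  | zero =>
    rw [TV_succ]
    exact TV0_shift hlp hp hl (syz_exact A N) (syz_surj A N) (syz_inj A N)
  | succ n ih => rw [TV_succ, ih, TV_succ]

lemma TV_comm (n : ℕ) : TV A n M N ↔ TV A n N M := by
  induction n generalizing M N with
  | zero => exact TV0_comm
  | succ n ih =>
    rw [TV_succ, ih]
    exact (TV_shift_left n (syz_exact A N) (syz_surj A N) (syz_inj A N)).symm

/-- Shift in the second variable. -/
lemma TV_shift_right (n : ℕ) [Module.Flat A F] {k : K →ₗ[A] F} {q : F →ₗ[A] N} (hkq : Exact k q)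
    (hq : Surjective q) (hk : Injective k) : TV A (n+1) M N ↔ TV A n M K := by
  rw [TV_comm, TV_shift_left n hkq hq hk, TV_comm]

lemma TV_congr_right (n : ℕ) (e : M ≃ₗ[A] N) : TV A n L M ↔ TV A n L N := by
  cases n with
  | zero =>
    have ex : Exact (syzI A M)
        (e.toLinearMap.comp (syzP A M)) := by
      intro x
      rw [← syz_exact A M x]
      simp
    have hs : Surjective (e.toLinearMap.comp (syzP A M)) :=
      e.surjective.comp (syz_surj A M)
    constructor
    · intro h
      rw [TV_zero] at h
      exact TV0_of_inj ex hs h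
    · intro h
      rw [TV_zero]
      exact TV0_inj h ex hs (syz_inj A M)
  | succ n =>
    have ex : Exact (syzI A M)
        (e.toLinearMap.comp (syzP A M)) := by
      intro x
      rw [← syz_exact A M x]
      simp
    have hs : Surjective (e.toLinearMap.comp (syzP A M)) :=
      e.surjective.comp (syz_surj A M)
    rw [TV_succ, TV_shift_right n ex hs (syz_inj A M)]

lemma TV_congr_left (n : ℕ) (e : M ≃ₗ[A] N) : TV A n M L ↔ TV A n N L := by
  rw [TV_comm, TV_congr_right n e, TV_comm]

/-- middle exactness -/
lemma TV_middle (n : ℕ) {f : M' →ₗ[A] M} {g : M →ₗ[A] M''} (hfg : Exact f g) (hg : Surjective g)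
    (hf : Injective f) (h' : TV A n M' N) (h'' : TV A n M'' N) : TV A n M N := by
  induction n generalizing N with
  | zero =>
    rw [TV_zero] at *
    rw [injective_iff_map_eq_zero]
    intro z hz
    have h1 : g.rTensor _ z = 0 := by
      apply (injective_iff_map_eq_zero _).mp h''
      rw [← LinearMap.comp_apply, LinearMap.lTensor_comp_rTensor, ← LinearMap.rTensor_comp_lTensor,
        LinearMap.comp_apply, hz, map_zero]
    obtain ⟨w, rfl⟩ := (rTensor_exact _ hfg hg _).mp h1
    have h2 : w = 0 := by
      apply (injective_iff_map_eq_zero _).mp h'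
      apply (injective_iff_map_eq_zero _).mp
        (Module.Flat.rTensor_preserves_injective_linearMap (M := FreeT A N) f hf)
      rw [← hz, ← LinearMap.comp_apply, LinearMap.rTensor_comp_lTensor,
        ← LinearMap.lTensor_comp_rTensor, LinearMap.comp_apply]
    rw [h2, map_zero]
  | succ n ih =>
    rw [TV_succ] at *
    exact ih h' h''

lemma TV_left (n : ℕ) {f : M' →ₗ[A] M} {g : M →ₗ[A] M''} (hfg : Exact f g) (hg : Surjective g)
    (hf : Injective f) (h' : TV A n M N) (h'' : TV A (n+1) M'' N) : TV A n M' N := by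
  induction n generalizing N with
  | zero =>
    rw [TV_succ] at h''
    rw [TV_zero] at h' ⊢
    have h1 : Injective (f.rTensor (Syz A N)) :=
      (LinearMap.lTensor_inj_iff_rTensor_inj _ _).mp (TV0_inj (TV0_symm h'') hfg hg hf)
    have h3 : Injective ((f.rTensor (FreeT A N)).comp ((syzI A N).lTensor M')) := by
      rw [LinearMap.rTensor_comp_lTensor, ← LinearMap.lTensor_comp_rTensor]
      exact h'.comp h1
    exact Injective.of_comp h3
  | succ n ih =>
    rw [TV_succ] at *
    exact ih h' h''

lemma TV_right (n : ℕ) {f : M' →ₗ[A] M} {g : M →ₗ[A] M''} (hfg : Exact f g) (hg : Surjective g)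
    (hf : Injective f) (h : TV A (n+1) M N) (h' : TV A n M' N) : TV A (n+1) M'' N := by
  induction n generalizing N with
  | zero =>
    rw [TV_succ] at *
    rw [TV_zero] at h'
    have h1 : Injective (f.rTensor (Syz A N)) := by
      have h2 : Injective ((f.rTensor (FreeT A N)).comp ((syzI A N).lTensor M')) :=
        (Module.Flat.rTensor_preserves_injective_linearMap (M := FreeT A N) f hf).comp h'
      rw [LinearMap.rTensor_comp_lTensor, ← LinearMap.lTensor_comp_rTensor] at h2
      exact Injective.of_comp h2
    rw [TV_zero] at h ⊢
    exact lTensor_injective_of_exact_of_exact_of_rTensor_injective hfg hg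
      (syz_exact A _) (syz_surj A _) h1 h
  | succ n ih =>
    rw [TV_succ] at *
    exact ih h h'

lemma TV_of_flat_right (n : ℕ) [Module.Flat A N] : TV A n M N := by
  induction n generalizing M with
  | zero =>
    apply TV0_symm
    rw [TV_zero]
    exact Module.Flat.lTensor_preserves_injective_linearMap _ (syz_inj A M)
  | succ n ih =>
    rw [TV_shift_left n (syz_exact A M) (syz_surj A M) (syz_inj A M)]
    exact ih

lemma TV_of_flat_left (n : ℕ) [Module.Flat A M] : TV A n M N := by
  rw [TV_comm]; exact TV_of_flat_right n

lemma flat_of_TV0 (h : ∀ I : Ideal A, TV A 0 (A ⧸ I) N) : Module.Flat A N := by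
  rw [Module.Flat.iff_lTensor_injective']
  intro I
  exact TV0_inj (TV0_symm (h I)) (LinearMap.exact_subtype_mkQ I) (Submodule.mkQ_surjective _)
    Subtype.val_injective

lemma TV_all_of_ideal (n : ℕ) (h : ∀ I : Ideal A, TV A n (A ⧸ I) N) : TV A n M N := by
  induction n generalizing N with
  | zero =>
    have := flat_of_TV0 h
    exact TV_of_flat_right 0
  | succ n ih =>
    rw [TV_succ]
    exact ih (fun I => (TV_succ n).mp (h I))

/-- noetherian local, f.g.: Tor against the residue field decides. -/
lemma TV_of_residue [IsNoetherianRing A] [IsLocalRing A] [Module.Finite A N] (n : ℕ)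
    (h : TV A n (IsLocalRing.ResidueField A) N) : TV A n M N := by
  induction n generalizing N with
  | zero =>
    obtain ⟨m, q, hq⟩ := Module.Finite.exists_fin' A N
    have h1 := TV0_inj h (LinearMap.exact_subtype_ker_map q) hq Subtype.val_injective
    have := Module.free_of_lTensor_residueField_injective (LinearMap.ker q).subtype q hq
      (LinearMap.exact_subtype_ker_map q) h1
    exact TV_of_flat_right 0
  | succ n ih =>
    obtain ⟨m, q, hq⟩ := Module.Finite.exists_fin' A N
    have : Module.Finite A (Fin m → A) := inferInstance
    rw [TV_shift_right n (LinearMap.exact_subtype_ker_map q) hq Subtype.val_injective] at h ⊢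
    exact ih h

end TVtheory

section BaseChange

open TensorProduct Function

lemma bc_inj {A B : Type u} [CommRing A] [CommRing B] [Algebra A B]
    {K F Y : Type u} [AddCommGroup K] [Module A K] [AddCommGroup F] [Module A F]
    [AddCommGroup Y] [Module A Y] [Module B Y] [IsScalarTower A B Y] (f : K →ₗ[A] F) :
    Injective ((f.baseChange B).lTensor Y) ↔ Injective (f.lTensor Y) := by
  have h : ∀ z, AlgebraTensorModule.cancelBaseChange A B B Y F ((f.baseChange B).lTensor Y z) =
      f.lTensor Y (AlgebraTensorModule.cancelBaseChange A B B Y K z) := by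
    intro z
    induction z with
    | zero => simp
    | add a b ha hb => simp [ha, hb]
    | tmul y w =>
      induction w with
      | zero => simp
      | add a b ha hb => rw [tmul_add, map_add, map_add, map_add, map_add, ha, hb]
      | tmul b k => simp
  constructor
  · intro hi a b hab
    obtain ⟨a, rfl⟩ := (AlgebraTensorModule.cancelBaseChange A B B Y K).surjective a
    obtain ⟨b, rfl⟩ := (AlgebraTensorModule.cancelBaseChange A B B Y K).surjective b
    rw [← h, ← h] at hab
    rw [hi ((AlgebraTensorModule.cancelBaseChange A B B Y F).injective hab)]
  · intro hi a b hab
    apply (AlgebraTensorModule.cancelBaseChange A B B Y K).injective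
    apply hi
    rw [← h, ← h, hab]

lemma TV_baseChange {A B : Type u} [CommRing A] [CommRing B] [Algebra A B]
    {L Y : Type u} [AddCommGroup L] [Module A L]
    [AddCommGroup Y] [Module A Y] [Module B Y] [IsScalarTower A B Y]
    (h : ∀ n, TV A n B L) (n : ℕ) : TV B n Y (B ⊗[A] L) ↔ TV A n Y L := by
  induction n generalizing L with
  | zero =>
    have h1 : Injective ((syzI A L).baseChange B) := TV_zero.mp (h 0)
    have h2 : Exact ((syzI A L).baseChange B) ((syzP A L).baseChange B) :=
      lTensor_exact B (syz_exact A L) (syz_surj A L)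
    have h3 : Surjective ((syzP A L).baseChange B) := LinearMap.lTensor_surjective B (syz_surj A L)
    rw [TV_zero (N := L), ← bc_inj (B := B)]
    exact ⟨fun h => TV0_inj h h2 h3 h1, fun h => TV0_of_inj h2 h3 h⟩
  | succ n ih =>
    have h1 : Injective ((syzI A L).baseChange B) := TV_zero.mp (h 0)
    have h2 : Exact ((syzI A L).baseChange B) ((syzP A L).baseChange B) :=
      lTensor_exact B (syz_exact A L) (syz_surj A L)
    have h3 : Surjective ((syzP A L).baseChange B) := LinearMap.lTensor_surjective B (syz_surj A L)
    rw [TV_shift_right n h2 h3 h1, TV_succ]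
    exact ih (fun n => (TV_succ n).mp (h (n+1)))

lemma TV_baseChange_flat {A B : Type u} [CommRing A] [CommRing B] [Algebra A B] [Module.Flat A B]
    {L Y : Type u} [AddCommGroup L] [Module A L]
    [AddCommGroup Y] [Module A Y] [Module B Y] [IsScalarTower A B Y]
    (n : ℕ) : TV B n Y (B ⊗[A] L) ↔ TV A n Y L :=
  TV_baseChange (fun n => TV_of_flat_left n) n

/-- the flat epimorphism case, for modules over the target. -/
lemma TV_epi {A B : Type u} [CommRing A] [CommRing B] [Algebra A B] [Module.Flat A B]
    {X Y : Type u} [AddCommGroup X] [Module A X] [Module B X] [IsScalarTower A B X]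
    [AddCommGroup Y] [Module A Y] [Module B Y] [IsScalarTower A B Y]
    (he : Bijective (LinearMap.liftBaseChange B (LinearMap.id : X →ₗ[A] X)))
    (n : ℕ) : TV B n Y X ↔ TV A n Y X := by
  have h0 := TV_baseChange_flat (A := A) (B := B) (L := X) (Y := Y) n
  have e : B ⊗[A] X ≃ₗ[B] X := LinearEquiv.ofBijective _ he
  refine Iff.trans ?_ h0
  exact Iff.symm (TV_congr_right (A := B) (M := B ⊗[A] X) (N := X) (L := Y) n e)

end BaseChange

section Step

open TensorProduct Function

variable {A B : Type u} [CommRing A] [CommRing B] [Algebra A B]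

lemma one_tmul_surj (hs : Surjective (algebraMap A B)) {X : Type u} [AddCommGroup X] [Module A X]
    (z : B ⊗[A] X) : ∃ l : X, z = 1 ⊗ₜ l := by
  induction z with
  | zero => exact ⟨0, by simp⟩
  | add a b ha hb =>
    obtain ⟨a, rfl⟩ := ha
    obtain ⟨b, rfl⟩ := hb
    exact ⟨a + b, by simp [tmul_add]⟩
  | tmul b l =>
    obtain ⟨a, rfl⟩ := hs b
    exact ⟨a • l, by rw [tmul_smul, smul_tmul', Algebra.algebraMap_eq_smul_one]⟩

lemma mulx_exact {x : A} (hk : RingHom.ker (algebraMap A B) = Ideal.span {x}) :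
    Exact (LinearMap.lsmul A A x) (Algebra.linearMap A B) := by
  intro a
  rw [Algebra.linearMap_apply, ← RingHom.mem_ker, hk, Ideal.mem_span_singleton']
  constructor
  · rintro ⟨c, rfl⟩
    exact ⟨c, by simp [mul_comm]⟩
  · rintro ⟨c, rfl⟩
    exact ⟨c, by simp [mul_comm]⟩

lemma one_tmul_eq_zero (hs : Surjective (algebraMap A B)) {x : A}
    (hk : RingHom.ker (algebraMap A B) = Ideal.span {x}) {X : Type u} [AddCommGroup X] [Module A X]
    (l : X) : (1 : B) ⊗ₜ[A] l = 0 ↔ ∃ l', l = x • l' := by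
  have hex := rTensor_exact X (mulx_exact hk) (by exact hs)
  constructor
  · intro h
    have h1 : (Algebra.linearMap A B).rTensor X (1 ⊗ₜ l) = 0 := by simpa using h
    obtain ⟨w, hw⟩ := (hex _).mp h1
    refine ⟨TensorProduct.lid A X w, ?_⟩
    have h2 : ∀ w, (LinearMap.lsmul A A x).rTensor X w = x • w := by
      intro w
      induction w with
      | zero => simp
      | add a b ha hb => rw [map_add, ha, hb, smul_add]
      | tmul a b => simp [smul_tmul']
    rw [h2] at hw
    have := congrArg (TensorProduct.lid A X) hw
    simpa using this.symm
  · rintro ⟨l', rfl⟩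
    rw [tmul_smul, smul_tmul', ← Algebra.algebraMap_eq_smul_one]
    have : x ∈ RingHom.ker (algebraMap A B) := by
      rw [hk]; exact Ideal.mem_span_singleton_self x
    rw [RingHom.mem_ker.mp this, zero_tmul]

lemma TV_quot_reg (hs : Surjective (algebraMap A B)) {x : A} (hx : IsSMulRegular A x)
    (hk : RingHom.ker (algebraMap A B) = Ideal.span {x}) {X : Type u} [AddCommGroup X] [Module A X]
    (hX : IsSMulRegular X x) (n : ℕ) : TV A n B X := by
  have hinj : Injective (LinearMap.lsmul A A x) := hx
  cases n with
  | zero =>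
    apply TV0_symm
    refine TV0_of_inj (mulx_exact hk) (by exact hs) ?_
    have h2 : ∀ w, (LinearMap.lsmul A A x).lTensor X w = x • w := by
      intro w
      induction w with
      | zero => simp
      | add a b ha hb => rw [map_add, ha, hb, smul_add]
      | tmul a b => rw [LinearMap.lTensor_tmul, LinearMap.lsmul_apply, tmul_smul]
    intro a b hab
    rw [h2, h2] at hab
    apply (TensorProduct.rid A X).injective
    apply hX
    simpa using congrArg (TensorProduct.rid A X) hab
  | succ n =>
    rw [TV_shift_left n (mulx_exact hk) (by exact hs) hinj]
    exact TV_of_flat_left n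

lemma step_seq (hs : Surjective (algebraMap A B)) {x : A} (hx : IsSMulRegular A x)
    (hk : RingHom.ker (algebraMap A B) = Ideal.span {x}) (M : Type u) [AddCommGroup M] [Module A M]
    [Module B M] [IsScalarTower A B M] :
    ∃ (L G Om : Type u) (_ : AddCommGroup L) (_ : Module A L) (_ : AddCommGroup G) (_ : Module A G)
      (_ : AddCommGroup Om) (_ : Module B Om) (i : L →ₗ[A] G) (p : G →ₗ[A] M)
      (f : M →ₗ[B] B ⊗[A] L) (g : B ⊗[A] L →ₗ[B] Om) (j : Om →ₗ[B] B ⊗[A] G)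
      (q : B ⊗[A] G →ₗ[B] M), Module.Flat A G ∧ IsSMulRegular L x ∧ Exact i p ∧ Surjective p ∧
        Injective i ∧ Exact f g ∧ Surjective g ∧ Injective f ∧ Exact j q ∧ Surjective q ∧
        Injective j := by
  have hxM : ∀ m : M, x • m = 0 := by
    intro m
    have : x ∈ RingHom.ker (algebraMap A B) := by
      rw [hk]; exact Ideal.mem_span_singleton_self x
    rw [← algebraMap_smul B x m, RingHom.mem_ker.mp this, zero_smul]
  have hG : IsSMulRegular (FreeT A M) x := by
    intro a b hab
    refine Finsupp.ext (M := A) fun m => hx ?_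
    exact congrArg (fun t : M →₀ A => t m) hab
  let mu : FreeT A M →ₗ[A] Syz A M :=
    LinearMap.codRestrict (LinearMap.ker (syzP A M)) (x • LinearMap.id) (by
      intro c
      simp [hxM])
  have hmu : ∀ g, syzI A M (mu g) = x • g := fun g => rfl
  let i := syzI A M
  let p := syzP A M
  let phi : FreeT A M →ₗ[A] B ⊗[A] Syz A M := (TensorProduct.mk A B (Syz A M) 1).comp mu
  have hphi : ∀ g, phi g = 1 ⊗ₜ mu g := fun g => rfl
  have hkp : ∀ g, phi g = 0 ↔ p g = 0 := by
    intro g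
    rw [hphi, one_tmul_eq_zero hs hk]
    constructor
    · rintro ⟨l, hl⟩
      have h1 : x • g = x • i l := by rw [← hmu, hl, map_smul]
      rw [hG h1]
      exact (syz_exact A M).apply_apply_eq_zero l
    · intro h
      obtain ⟨l, rfl⟩ := (syz_exact A M g).mp h
      exact ⟨l, syz_inj A M (by rw [hmu, map_smul])⟩
  let psi0 : M →ₗ[A] B ⊗[A] Syz A M :=
    ((LinearMap.ker p).liftQ phi (fun g hg => (hkp g).mpr hg)).comp
      (p.quotKerEquivOfSurjective (syz_surj A M)).symm.toLinearMap
  have hpsi : ∀ g, psi0 (p g) = phi g := by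
    intro g
    have : (p.quotKerEquivOfSurjective (syz_surj A M)).symm (p g) =
        (LinearMap.ker p).mkQ g := by
      rw [LinearEquiv.symm_apply_eq]
      rfl
    simp only [psi0, LinearMap.comp_apply, LinearEquiv.coe_coe, this]
    rfl
  let psi : M →ₗ[B] B ⊗[A] Syz A M := LinearMap.extendScalarsOfSurjective hs psi0
  have hpsi' : ∀ g, psi (p g) = phi g := hpsi
  let Om := LinearMap.range (i.baseChange B)
  let q : B ⊗[A] FreeT A M →ₗ[B] M := LinearMap.liftBaseChange B p
  refine ⟨Syz A M, FreeT A M, Om, inferInstance, inferInstance, inferInstance, inferInstance,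
    inferInstance, inferInstance, i, p, psi, (i.baseChange B).rangeRestrict, Om.subtype, q,
    inferInstance, ?_, syz_exact A M, syz_surj A M, syz_inj A M, ?_,
    LinearMap.surjective_rangeRestrict _, ?_, ?_, ?_, Subtype.val_injective⟩
  · intro a b hab
    apply syz_inj A M
    apply hG
    simpa using congrArg (syzI A M) hab
  · intro z
    obtain ⟨l, rfl⟩ := one_tmul_surj hs z
    have : (i.baseChange B).rangeRestrict (1 ⊗ₜ l) = 0 ↔ (1 : B) ⊗ₜ[A] i l = 0 := by
      rw [← Subtype.val_inj]
      simp
    rw [this, one_tmul_eq_zero hs hk]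
    constructor
    · rintro ⟨g, hg⟩
      refine ⟨p g, ?_⟩
      rw [hpsi', hphi]
      congr 1
      exact syz_inj A M (by rw [hmu]; exact hg.symm)
    · rintro ⟨m, hm⟩
      obtain ⟨g, rfl⟩ := syz_surj A M m
      have hm : phi g = 1 ⊗ₜ l := by rw [← hm]; exact (hpsi' g).symm
      have h1 : (1 : B) ⊗ₜ[A] (mu g - l) = 0 := by rw [tmul_sub, ← hm, hphi, sub_self]
      obtain ⟨l', hl'⟩ := (one_tmul_eq_zero hs hk _).mp h1
      refine ⟨g - i l', ?_⟩
      have h2 : l = mu g - x • l' := by rw [← hl']; abel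
      rw [h2, map_sub, map_smul, smul_sub]
      rfl
  · rw [injective_iff_map_eq_zero]
    intro m hm
    obtain ⟨g, rfl⟩ := syz_surj A M m
    rw [show syzP A M g = p g from rfl, hpsi', hkp] at hm
    exact hm
  · intro z
    obtain ⟨g, rfl⟩ := one_tmul_surj hs z
    have h1 : q (1 ⊗ₜ g) = p g := by simp [q]
    rw [h1]
    constructor
    · intro h
      obtain ⟨l, rfl⟩ := (syz_exact A M g).mp h
      exact ⟨⟨1 ⊗ₜ i l, ⟨1 ⊗ₜ l, by simp⟩⟩, rfl⟩
    · rintro ⟨⟨w, ⟨v, hv⟩⟩, hw⟩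
      obtain ⟨l, rfl⟩ := one_tmul_surj hs v
      rw [← h1, ← hw]
      simp only [Submodule.subtype_apply, ← hv]
      simp [q]
      exact (syz_exact A M).apply_apply_eq_zero l
  · intro m
    obtain ⟨g, rfl⟩ := syz_surj A M m
    exact ⟨1 ⊗ₜ g, by simp [q]; rfl⟩

lemma step (hs : Surjective (algebraMap A B)) {x : A} (hx : IsSMulRegular A x)
    (hk : RingHom.ker (algebraMap A B) = Ideal.span {x}) (M N : Type u) [AddCommGroup M]
    [Module A M] [Module B M] [IsScalarTower A B M] [AddCommGroup N]
    [Module A N] [Module B N] [IsScalarTower A B N] (n : ℕ) :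
    (TV B n M N → TV B (n+1) M N → TV A (n+1) M N) ∧
    (TV A (n+1) M N → TV B (n+2) M N → TV B n M N) := by
  obtain ⟨L, G, Om, _, _, _, _, _, _, i, p, f, g, j, q, _, hL, ip, hp, hi, fg, hg, hf, jq, hq, hj⟩ :=
    step_seq hs hx hk M
  have hb : TV A (n+1) M N ↔ TV B n (B ⊗[A] L) N := by
    rw [TV_shift_left n ip hp hi, TV_comm, ← TV_baseChange (B := B) (TV_quot_reg hs hx hk hL),
      TV_comm]
  rw [hb]
  constructor
  · intro h1 h2
    rw [TV_shift_left n jq hq hj] at h2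
    exact TV_middle n fg hg hf h1 h2
  · intro h1 h2
    rw [TV_shift_left (n+1) jq hq hj] at h2
    exact TV_left n fg hg hf h1 h2

end Step

section Main

open TensorProduct Function
open scoped Pointwise

lemma TV_bij {A B : Type u} [CommRing A] [CommRing B] [Algebra A B]
    (hb : Bijective (algebraMap A B)) {M N : Type u} [AddCommGroup M]
    [Module A M] [Module B M] [IsScalarTower A B M] [AddCommGroup N]
    [Module A N] [Module B N] [IsScalarTower A B N] (n : ℕ) : TV B n M N ↔ TV A n M N := by
  have : Module.Flat A B :=
    Module.Flat.of_linearEquiv (LinearEquiv.ofBijective (Algebra.linearMap A B) hb).symm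
  apply TV_epi
  constructor
  · rw [injective_iff_map_eq_zero]
    intro z hz
    obtain ⟨l, rfl⟩ := one_tmul_surj hb.2 z
    simp at hz
    simp [hz]
  · intro m
    exact ⟨1 ⊗ₜ m, by simp⟩

lemma TV_loc {A B : Type u} [CommRing A] [CommRing B] [Algebra A B] (T : Submonoid A)
    [IsLocalization T B] {M N : Type u} [AddCommGroup M]
    [Module A M] [Module B M] [IsScalarTower A B M] [AddCommGroup N]
    [Module A N] [Module B N] [IsScalarTower A B N] (n : ℕ) : TV B n M N ↔ TV A n M N := by
  have : Module.Flat A B := IsLocalization.flat B T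
  apply TV_epi
  have key : ∀ (s : B) (m : N), s ⊗ₜ[A] m = 1 ⊗ₜ[A] (s • m) := by
    intro s m
    obtain ⟨q, t, rfl⟩ := IsLocalization.exists_mk'_eq T s
    have hu : IsUnit (algebraMap A B t) := IsLocalization.map_units B t
    rw [← hu.smul_left_cancel]
    have h1 : algebraMap A B t * IsLocalization.mk' B q t = algebraMap A B q := by
      rw [mul_comm, IsLocalization.mk'_spec]
    have h2 : (t : A) • (IsLocalization.mk' B q t • m) = q • m := by
      rw [← algebraMap_smul B (t : A), ← mul_smul, h1, algebraMap_smul]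
    rw [smul_tmul', smul_eq_mul, h1, algebraMap_smul, ← tmul_smul, h2,
      Algebra.algebraMap_eq_smul_one, smul_tmul]
  constructor
  · rw [injective_iff_map_eq_zero]
    intro z hz
    have : ∃ l : N, z = 1 ⊗ₜ l := by
      clear hz
      induction z with
      | zero => exact ⟨0, by simp⟩
      | add a b ha hb =>
        obtain ⟨a, rfl⟩ := ha
        obtain ⟨b, rfl⟩ := hb
        exact ⟨a + b, by simp [tmul_add]⟩
      | tmul b l => exact ⟨b • l, key _ _⟩
    obtain ⟨l, rfl⟩ := this
    simp at hz
    simp [hz]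
  · intro m
    exact ⟨1 ⊗ₜ m, by simp⟩

lemma chain (c : ℕ) : ∀ {A B : Type u} [CommRing A] [CommRing B] [Algebra A B]
    (_ : Surjective (algebraMap A B)) (rs : List A) (_ : rs.length = c)
    (_ : RingTheory.Sequence.IsWeaklyRegular A rs)
    (_ : RingHom.ker (algebraMap A B) = Ideal.ofList rs)
    (M N : Type u) [AddCommGroup M]
    [Module A M] [Module B M] [IsScalarTower A B M] [AddCommGroup N]
    [Module A N] [Module B N] [IsScalarTower A B N] (e : ℕ)
    (_ : ∃ n0, ∀ n ≥ n0, TV B n M N),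
    (∃ n0, ∀ n ≥ n0, TV A n M N) ∧ ((∀ n ≥ e + c, TV A n M N) → ∀ n ≥ e, TV B n M N) := by
  induction c with
  | zero =>
    intro A B _ _ _ hs rs hl hreg hk M N _ _ _ _ _ _ _ _ e hv
    rw [List.length_eq_zero_iff] at hl
    subst hl
    have hb : Bijective (algebraMap A B) := by
      refine ⟨?_, hs⟩
      rw [RingHom.injective_iff_ker_eq_bot, hk, Ideal.ofList_nil]
    simp only [TV_bij hb] at hv ⊢
    exact ⟨hv, fun h => h⟩
  | succ c ih =>
    intro A B _ _ _ hs rs hl hreg hk M N _ _ _ _ _ _ _ _ e hv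
    obtain ⟨x, rs, rfl⟩ := List.exists_cons_of_length_eq_add_one hl
    have hx0 : ∀ a ∈ Ideal.span {x}, algebraMap A B a = 0 := by
      intro a ha
      rw [← RingHom.mem_ker, hk, Ideal.ofList_cons]
      exact Ideal.mem_sup_left ha
    obtain ⟨hx, hreg⟩ := (RingTheory.Sequence.isWeaklyRegular_cons_iff A x rs).mp hreg
    let A1 := A ⧸ Ideal.span {x}
    let _ : Algebra A1 B := (Ideal.Quotient.lift (Ideal.span {x}) (algebraMap A B) hx0).toAlgebra
    have _ : IsScalarTower A A1 B := IsScalarTower.of_algebraMap_eq' rfl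
    let _ : Module A1 M := Module.compHom M (algebraMap A1 B)
    let _ : Module A1 N := Module.compHom N (algebraMap A1 B)
    have _ : IsScalarTower A1 B M := IsScalarTower.of_algebraMap_smul fun _ _ => rfl
    have _ : IsScalarTower A1 B N := IsScalarTower.of_algebraMap_smul fun _ _ => rfl
    have _ : IsScalarTower A A1 M := IsScalarTower.of_algebraMap_smul fun r m =>
      algebraMap_smul B r m
    have _ : IsScalarTower A A1 N := IsScalarTower.of_algebraMap_smul fun r m =>
      algebraMap_smul B r m
    have hs1 : Surjective (algebraMap A1 B) := by
      intro b
      obtain ⟨a, rfl⟩ := hs b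
      exact ⟨algebraMap A A1 a, (IsScalarTower.algebraMap_apply A A1 B a).symm⟩
    have hreg1 : RingTheory.Sequence.IsWeaklyRegular A1 (rs.map (algebraMap A A1)) := by
      rw [RingTheory.Sequence.isWeaklyRegular_map_algebraMap_iff]
      have heq : (x • ⊤ : Submodule A A) = Ideal.span {x} := by
        ext a
        rw [Ideal.mem_span_singleton', Submodule.mem_smul_pointwise_iff_exists]
        simp [mul_comm]
      exact ((Submodule.quotEquivOfEq _ _ heq).isWeaklyRegular_congr rs).mp hreg
    have hq : Surjective (algebraMap A A1) := Ideal.Quotient.mk_surjective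
    have hk1 : RingHom.ker (algebraMap A1 B) = Ideal.ofList (rs.map (algebraMap A A1)) := by
      rw [← Ideal.map_ofList]
      have h1 : (RingHom.ker (algebraMap A1 B)).comap (algebraMap A A1) =
          RingHom.ker (algebraMap A B) := by
        ext a
        simp [RingHom.mem_ker, ← IsScalarTower.algebraMap_apply A A1 B a]
      rw [← Ideal.map_comap_of_surjective _ hq (RingHom.ker (algebraMap A1 B)), h1, hk,
        Ideal.ofList_cons, Ideal.map_sup]
      have h2 : Ideal.map (algebraMap A A1) (Ideal.span {x}) = ⊥ := Ideal.map_quotient_self _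
      rw [h2, bot_sup_eq]
    have hkA : RingHom.ker (algebraMap A A1) = Ideal.span {x} := Ideal.mk_ker
    obtain ⟨⟨n1, hn1⟩, H2⟩ := ih hs1 (rs.map (algebraMap A A1)) (by simpa using hl) hreg1 hk1 M N e hv
    constructor
    · refine ⟨n1 + 1, fun n hn => ?_⟩
      obtain ⟨n, rfl⟩ : ∃ m, n = m + 1 := ⟨n - 1, by omega⟩
      exact (step hq hx hkA M N n).1 (hn1 n (by omega)) (hn1 (n+1) (by omega))
    · intro hA
      apply H2
      -- downward induction
      have key : ∀ d, (∀ n ≥ e + c + d, TV A1 n M N) → ∀ n ≥ e + c, TV A1 n M N := by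
        intro d
        induction d with
        | zero => exact fun h => h
        | succ d ihd =>
          intro h
          apply ihd
          intro n hn
          exact (step hq hx hkA M N n).2 (hA _ (by omega)) (h _ (by omega))
      exact key n1 (fun n hn => hn1 n (by omega))

lemma koszul {A : Type u} [CommRing A] (rs : List A) {N : Type u} [AddCommGroup N] [Module A N] :
    ∀ {X : Type u} [AddCommGroup X] [Module A X] (_ : RingTheory.Sequence.IsWeaklyRegular X rs)
    (e : ℕ) (_ : ∀ n ≥ e, TV A n X N) (n : ℕ) (_ : n ≥ e + rs.length),
    TV A n (X ⧸ (Ideal.ofList rs • ⊤ : Submodule A X)) N := by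
  induction rs with
  | nil =>
    intro X _ _ hreg e h n hn
    have : (Ideal.ofList ([] : List A) • ⊤ : Submodule A X) = ⊥ := by simp
    rw [TV_congr_left n (Submodule.quotEquivOfEqBot _ this)]
    exact h n (by simpa using hn)
  | cons x rs ih =>
    intro X _ _ hreg e h n hn
    obtain ⟨hx, hreg⟩ := (RingTheory.Sequence.isWeaklyRegular_cons_iff X x rs).mp hreg
    rw [TV_congr_left n (Submodule.quotOfListConsSMulTopEquivQuotSMulTopInner X x rs)]
    refine ih hreg (e + 1) ?_ n (by simp at hn; omega)
    intro n hn
    obtain ⟨n, rfl⟩ : ∃ m, n = m + 1 := ⟨n - 1, by omega⟩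
    have hinj : Injective (LinearMap.lsmul A X x) := hx
    have hex : Exact (LinearMap.lsmul A X x) (Submodule.mkQ (x • ⊤ : Submodule A X)) := by
      intro y
      rw [Submodule.mkQ_apply, Submodule.Quotient.mk_eq_zero,
        Submodule.mem_smul_pointwise_iff_exists]
      simp
    exact TV_right n hex (Submodule.mkQ_surjective _) hinj (h _ (by omega)) (h _ (by omega))

/-- `Tor_n(A/(rs), N) = 0` for `n` larger than the length of the regular sequence `rs`. -/
lemma koszul' {A B : Type u} [CommRing A] [AddCommGroup B] [Module A B] (rs : List A)
    (hreg : RingTheory.Sequence.IsWeaklyRegular A rs)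
    (f : A →ₗ[A] B) (hf : Surjective f) (hk : LinearMap.ker f = Ideal.ofList rs)
    {N : Type u} [AddCommGroup N] [Module A N] (n : ℕ) (hn : n ≥ rs.length) : TV A n B N := by
  have h1 := koszul rs (N := N) hreg 0 (fun n _ => TV_of_flat_left n) n (by omega)
  have heq : (Ideal.ofList rs • ⊤ : Submodule A A) = LinearMap.ker f := by
    rw [hk, smul_eq_mul, Ideal.mul_top]
  rwa [TV_congr_left n ((Submodule.quotEquivOfEq _ _ heq).trans
    (f.quotKerEquivOfSurjective hf))] at h1

lemma TV_mono {A : Type u} [CommRing A] {n : ℕ}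
    (h : ∀ (X Y : Type u) [AddCommGroup X] [Module A X] [AddCommGroup Y] [Module A Y], TV A n X Y)
    (m : ℕ) (hm : n ≤ m) :
    ∀ (X Y : Type u) [AddCommGroup X] [Module A X] [AddCommGroup Y] [Module A Y], TV A m X Y := by
  induction m, hm using Nat.le_induction with
  | base => exact h
  | succ m _ ih =>
    intro X Y _ _ _ _
    rw [TV_succ]
    exact ih _ _

/-- A regular local ring has finite weak global dimension. -/
lemma reg_gd {Q : Type u} [CommRing Q] (h : IsRegLocal Q) :
    ∃ n, ∀ (X Y : Type u) [AddCommGroup X] [Module Q X] [AddCommGroup Y] [Module Q Y],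
      TV Q n X Y := by
  obtain ⟨_, _, rs, hreg, _, hspan⟩ := h
  have hm : Ideal.ofList rs = IsLocalRing.maximalIdeal Q := by
    change Ideal.span {x | x ∈ rs} = _
    rw [hspan]
    apply le_antisymm
    · rw [Ideal.span_le]
      exact fun x hx => hx
    · exact fun x hx => Ideal.subset_span hx
  refine ⟨rs.length, fun X Y _ _ _ _ => ?_⟩
  apply TV_all_of_ideal
  intro I
  rw [TV_comm]
  apply TV_of_residue
  refine koszul' rs hreg (Submodule.mkQ (IsLocalRing.maximalIdeal Q)) (Submodule.mkQ_surjective _)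
    ?_ _ le_rfl
  rw [Submodule.ker_mkQ, hm]

lemma main_S {S B : Type u} [CommRing S] [CommRing B] [Algebra S B] [IsNoetherianRing S]
    [IsLocalRing S] (hs : Surjective (algebraMap S B)) (rs : List S)
    (hreg : RingTheory.Sequence.IsWeaklyRegular S rs)
    (hk : RingHom.ker (algebraMap S B) = Ideal.ofList rs)
    (b : B) (hb : ∀ s : S, s • b = 0 ↔ s ∈ IsLocalRing.maximalIdeal S)
    (gd : ∃ n, ∀ (X Y : Type u) [AddCommGroup X] [Module S X] [AddCommGroup Y] [Module S Y],
      TV S n X Y)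
    (M N : Type u) [AddCommGroup M] [Module B M] [AddCommGroup N] [Module B N] [Module.Finite B N]
    (hv : ∃ n0, ∀ n ≥ n0, TV B n M N) (n : ℕ) : TV B n M N := by
  let _ : Module S M := Module.compHom M (algebraMap S B)
  let _ : Module S N := Module.compHom N (algebraMap S B)
  have _ : IsScalarTower S B M := IsScalarTower.of_algebraMap_smul fun _ _ => rfl
  have _ : IsScalarTower S B N := IsScalarTower.of_algebraMap_smul fun _ _ => rfl
  have _ : Module.Finite S B := Module.Finite.of_surjective (Algebra.linearMap S B) hs
  have _ : Module.Finite S N := Module.Finite.trans B N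
  refine (chain rs.length hs rs rfl hreg hk M N 0 hv).2 ?_ n (Nat.zero_le n)
  have hB : ∀ n ≥ rs.length, TV S n B N := fun n hn =>
    koszul' rs hreg (Algebra.linearMap S B) hs hk n hn
  obtain ⟨g, hg⟩ := gd
  let f : S →ₗ[S] B := LinearMap.toSpanSingleton S B b
  have hfk : LinearMap.ker f = IsLocalRing.maximalIdeal S := by
    ext s
    rw [LinearMap.mem_ker, LinearMap.toSpanSingleton_apply, hb]
  let k : IsLocalRing.ResidueField S →ₗ[S] B :=
    Submodule.liftQ (IsLocalRing.maximalIdeal S) f hfk.ge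
  have hk : Injective k := by
    rw [← LinearMap.ker_eq_bot]
    exact Submodule.ker_liftQ_eq_bot _ _ _ hfk.le
  have hex : Exact k (LinearMap.range k).mkQ := LinearMap.exact_map_mkQ_range k
  have key : ∀ d, (∀ n ≥ rs.length + d, ∀ (X : Type u) [AddCommGroup X] [Module S X], TV S n X N) →
      ∀ n ≥ rs.length, ∀ (X : Type u) [AddCommGroup X] [Module S X], TV S n X N := by
    intro d
    induction d with
    | zero => exact fun h => h
    | succ d ihd =>
      intro h
      apply ihd
      intro n hn X _ _
      apply TV_of_residue
      exact TV_left n hex (Submodule.mkQ_surjective _) hk (hB n (by omega)) (h (n+1) (by omega) _)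
  intro n hn
  exact key g (fun n hn X _ _ => TV_mono hg n (by omega) X N) n (by omega) M

end Main

section TorConn

open TensorProduct Function

variable {A : Type u} [CommRing A]

lemma flat_homology {X1 X2 X3 : Type u} [AddCommGroup X1] [Module A X1] [AddCommGroup X2]
    [Module A X2] [AddCommGroup X3] [Module A X3] (f' : X1 →ₗ[A] X2) (g : X2 →ₗ[A] X3)
    (f : X1 →ₗ[A] LinearMap.ker g) (hf : ∀ x, (f x : X2) = f' x)
    (B : Type u) [AddCommGroup B] [Module A B] [Module.Flat A B] :
    Subsingleton (B ⊗[A] (LinearMap.ker g ⧸ LinearMap.range f)) ↔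
      Exact (f'.lTensor B) (g.lTensor B) := by
  have e1 : Exact (f.lTensor B) ((LinearMap.range f).mkQ.lTensor B) :=
    lTensor_exact B (LinearMap.exact_map_mkQ_range f) (Submodule.mkQ_surjective _)
  have s1 : Surjective ((LinearMap.range f).mkQ.lTensor B) :=
    LinearMap.lTensor_surjective _ (Submodule.mkQ_surjective _)
  have e2 : Exact ((LinearMap.ker g).subtype.lTensor B) (g.lTensor B) :=
    Module.Flat.lTensor_exact B (LinearMap.exact_subtype_ker_map g)
  have i2 : Injective ((LinearMap.ker g).subtype.lTensor B) :=
    Module.Flat.lTensor_preserves_injective_linearMap _ Subtype.val_injective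
  have hff : f' = (LinearMap.ker g).subtype ∘ₗ f := by
    ext x; exact (hf x).symm
  have hff' : ∀ x, f'.lTensor B x = (LinearMap.ker g).subtype.lTensor B (f.lTensor B x) := by
    intro x
    rw [hff, LinearMap.lTensor_comp]; rfl
  constructor
  · intro hs y
    constructor
    · intro hy
      obtain ⟨y, rfl⟩ := (e2 y).mp hy
      obtain ⟨x, rfl⟩ := (e1 y).mp (Subsingleton.elim _ _)
      exact ⟨x, hff' x⟩
    · rintro ⟨x, rfl⟩
      rw [hff']
      exact e2.apply_apply_eq_zero _
  · intro hex
    refine subsingleton_of_forall_eq 0 fun z => ?_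
    obtain ⟨y, rfl⟩ := s1 z
    obtain ⟨x, hx⟩ := (hex _).mp (e2.apply_apply_eq_zero y)
    rw [hff'] at hx
    rw [← i2 hx]
    exact e1.apply_apply_eq_zero _

lemma exact_iff_TV0 {P2 P1 P0 K W X : Type u} [AddCommGroup P2] [Module A P2] [AddCommGroup P1]
    [Module A P1] [AddCommGroup P0] [Module A P0] [AddCommGroup K] [Module A K]
    [AddCommGroup W] [Module A W] [AddCommGroup X] [Module A X] [Module.Flat A P0]
    {d2 : P2 →ₗ[A] P1} {d1 : P1 →ₗ[A] P0} {e : P1 →ₗ[A] K} {k : K →ₗ[A] P0} {q : P0 →ₗ[A] W}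
    (hd : d1 = k ∘ₗ e) (h2 : Exact d2 e) (he : Surjective e) (hk : Injective k) (hkq : Exact k q)
    (hq : Surjective q) :
    Exact (d2.lTensor X) (d1.lTensor X) ↔ TV A 0 X W := by
  have hd' : ∀ x, d1.lTensor X x = k.lTensor X (e.lTensor X x) := by
    intro x
    rw [hd, LinearMap.lTensor_comp]; rfl
  have ex := lTensor_exact X h2 he
  have se := LinearMap.lTensor_surjective X he
  constructor
  · intro h
    refine TV0_of_inj hkq hq ?_
    rw [injective_iff_map_eq_zero]
    intro z hz
    obtain ⟨y, rfl⟩ := se z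
    rw [← hd', h y] at hz
    obtain ⟨x, rfl⟩ := hz
    exact ex.apply_apply_eq_zero _
  · intro h
    have hi := TV0_inj h hkq hq hk
    intro y
    rw [hd', map_eq_zero_iff _ hi]
    exact ex y

lemma TV_resolution (P : ℕ → Type u) [∀ n, AddCommGroup (P n)] [∀ n, Module A (P n)]
    [∀ n, Module.Flat A (P n)] (d : ∀ n, P (n+1) →ₗ[A] P n) (hd : ∀ n, Exact (d (n+1)) (d n))
    {N : Type u} [AddCommGroup N] [Module A N] (ε : P 0 →ₗ[A] N) (hε : Surjective ε)
    (h0 : Exact (d 0) ε) (X : Type u) [AddCommGroup X] [Module A X] (n : ℕ) :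
    Exact ((d (n+1)).lTensor X) ((d n).lTensor X) ↔ TV A n X N := by
  have hr : ∀ n, Exact (d (n+1)) (d n).rangeRestrict := by
    intro n x
    rw [← hd n x, Subtype.ext_iff]
    rfl
  have key : ∀ n m, TV A m X (P n ⧸ LinearMap.range (d n)) ↔ TV A (m + n) X N := by
    intro n
    induction n with
    | zero =>
      intro m
      have : LinearMap.range (d 0) = LinearMap.ker ε := (LinearMap.exact_iff.mp h0).symm
      exact TV_congr_right m ((Submodule.quotEquivOfEq _ _ this).trans
        (ε.quotKerEquivOfSurjective hε))
    | succ n ih =>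
      intro m
      have h1 : LinearMap.range (d (n+1)) = LinearMap.ker (d n).rangeRestrict :=
        (LinearMap.exact_iff.mp (hr n)).symm
      rw [TV_congr_right m ((Submodule.quotEquivOfEq _ _ h1).trans
        ((d n).rangeRestrict.quotKerEquivOfSurjective (LinearMap.surjective_rangeRestrict _))),
        ← TV_shift_right m (LinearMap.exact_subtype_mkQ (LinearMap.range (d n)))
        (Submodule.mkQ_surjective _) Subtype.val_injective, ih, show m + 1 + n = m + (n+1) by omega]
  rw [exact_iff_TV0 (d1 := d n) (k := (LinearMap.range (d n)).subtype) (q := (LinearMap.range (d n)).mkQ)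
    (e := (d n).rangeRestrict) rfl (hr n) (LinearMap.surjective_rangeRestrict _)
    Subtype.val_injective (LinearMap.exact_subtype_mkQ _) (Submodule.mkQ_surjective _), key]
  rw [zero_add]

lemma exact_assoc {P2 P1 P0 : Type u} [AddCommGroup P2] [Module A P2] [AddCommGroup P1]
    [Module A P1] [AddCommGroup P0] [Module A P0] (B M : Type u) [AddCommGroup B] [Module A B]
    [AddCommGroup M] [Module A M] (f : P2 →ₗ[A] P1) (g : P1 →ₗ[A] P0) :
    Exact ((f.lTensor M).lTensor B) ((g.lTensor M).lTensor B) ↔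
      Exact (f.lTensor (B ⊗[A] M)) (g.lTensor (B ⊗[A] M)) := by
  apply Exact.iff_of_ladder_linearEquiv (e₁ := TensorProduct.assoc A B M P2)
    (e₂ := TensorProduct.assoc A B M P1) (e₃ := TensorProduct.assoc A B M P0) <;>
  · ext; rfl

theorem TorM_TV (B M N : Type u) [AddCommGroup B] [Module A B] [Module.Flat A B]
    [AddCommGroup M] [Module A M] [AddCommGroup N] [Module A N] (n : ℕ) :
    Subsingleton (B ⊗[A] TorM A (n+1) M N) ↔ TV A n (B ⊗[A] M) N := by
  let P := projectiveResolution (ModuleCat.of A N)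
  let F := (MonoidalCategory.tensoringLeft (ModuleCat.{u} A)).obj (ModuleCat.of A M)
  let S : ShortComplex (ModuleCat.{u} A) :=
    ShortComplex.mk (F.map (P.complex.d (n+2) (n+1))) (F.map (P.complex.d (n+1) n))
      (by rw [← F.map_comp, HomologicalComplex.d_comp_d, F.map_zero])
  let e : TorModCat A (n+1) M N ≅ S.moduleCatLeftHomologyData.H :=
    (P.isoLeftDerivedObj F (n+1)) ≪≫
    (HomologicalComplex.homologyIsoSc' _ (n+2) (n+1) n (by simp) (by simp)) ≪≫
    S.moduleCatHomologyIso
  let e' : TorM A (n+1) M N ≃ₗ[A] (LinearMap.ker S.g.hom ⧸ LinearMap.range S.moduleCatToCycles) :=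
    e.toLinearEquiv
  have : ∀ n, Module.Flat A (P.complex.X n) := fun n => by
    have : Module.Projective A (P.complex.X n) :=
      (IsProjective.iff_projective _).mpr (inferInstanceAs (Projective (P.complex.X n)))
    infer_instance
  rw [(e'.lTensor B).toEquiv.subsingleton_congr,
    flat_homology S.f.hom S.g.hom S.moduleCatToCycles (fun _ => rfl) B]
  let ε : P.complex.X 0 →ₗ[A] N := (P.π.f 0).hom
  refine Iff.trans ?_ (TV_resolution (fun n => P.complex.X n)
    (fun n => (P.complex.d (n+1) n).hom) ?_ ε ?_ ?_ (B ⊗[A] M) n)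
  · exact exact_assoc B M (P.complex.d (n+2) (n+1)).hom (P.complex.d (n+1) n).hom
  · intro n
    exact (ShortComplex.ShortExact.moduleCat_exact_iff_function_exact _).mp (P.exact_succ n)
  · exact (ModuleCat.epi_iff_surjective _).mp (inferInstanceAs (Epi (P.π.f 0)))
  · exact (ShortComplex.ShortExact.moduleCat_exact_iff_function_exact _).mp P.exact₀

end TorConn

section Final

open TensorProduct Function

lemma subsingleton_of_torsion {R B T : Type u} [CommRing R] [CommRing B] [Algebra R B]
    [AddCommGroup T] [Module R T] (hT : Submodule.torsion R T = ⊤)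
    (hu : ∀ r ∈ nonZeroDivisors R, IsUnit (algebraMap R B r)) : Subsingleton (B ⊗[R] T) := by
  refine subsingleton_of_forall_eq 0 fun z => ?_
  induction z with
  | zero => rfl
  | add a b ha hb => rw [ha, hb, add_zero]
  | tmul b t =>
    have ht : t ∈ Submodule.torsion R T := by rw [hT]; trivial
    obtain ⟨a, ha⟩ := (Submodule.mem_torsion_iff t).mp ht
    have ha' : (a : R) • t = 0 := ha
    obtain ⟨c, hc⟩ := (hu a a.2).exists_left_inv
    have : b = (a : R) • (c * b) := by
      rw [Algebra.smul_def, ← mul_assoc, mul_comm _ c, hc, one_mul]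
    rw [this, smul_tmul, ha', tmul_zero]

lemma core {R S B : Type u} [CommRing R] [CommRing S] [CommRing B] [Algebra S B] [Algebra R B]
    [Module.Flat R B] [IsNoetherianRing S]
    [IsLocalRing S] (hs : Surjective (algebraMap S B)) (rs : List S)
    (hreg : RingTheory.Sequence.IsWeaklyRegular S rs)
    (hk : RingHom.ker (algebraMap S B) = Ideal.ofList rs)
    (b : B) (hb : ∀ s : S, s • b = 0 ↔ s ∈ IsLocalRing.maximalIdeal S)
    (gd : ∃ n, ∀ (X Y : Type u) [AddCommGroup X] [Module S X] [AddCommGroup Y] [Module S Y],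
      TV S n X Y)
    (hu : ∀ r ∈ nonZeroDivisors R, IsUnit (algebraMap R B r))
    (M N : Type u) [AddCommGroup M] [Module R M] [AddCommGroup N] [Module R N] [Module.Finite R N]
    (hv : ∃ n0 : ℕ, ∀ i ≥ n0, Submodule.torsion R (TorM R i M N) = ⊤) (n : ℕ) :
    Subsingleton (B ⊗[R] TorM R (n+1) M N) := by
  have key : ∀ n, Subsingleton (B ⊗[R] TorM R (n+1) M N) ↔ TV B n (B ⊗[R] M) (B ⊗[R] N) :=
    fun n => (TorM_TV B M N n).trans (TV_baseChange_flat n).symm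
  rw [key]
  obtain ⟨n0, h0⟩ := hv
  refine main_S hs rs hreg hk b hb gd _ _ ⟨n0, fun n hn => ?_⟩ n
  rw [← key]
  exact subsingleton_of_torsion (h0 _ (by omega)) hu

lemma core2 {R Q C : Type u} [CommRing R] [CommRing Q] [CommRing C] [Algebra R C] [Algebra Q C]
    [Module.Flat R C] [IsNoetherianRing Q] (hs : Surjective (algebraMap Q C)) (rs : List Q)
    (hreg : RingTheory.Sequence.IsWeaklyRegular Q rs)
    (hk : RingHom.ker (algebraMap Q C) = Ideal.ofList rs)
    (gd : ∃ n, ∀ (X Y : Type u) [AddCommGroup X] [Module Q X] [AddCommGroup Y] [Module Q Y],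
      TV Q n X Y)
    (P : Ideal C) [P.IsPrime] (y : C) (hy : ∀ c, c ∈ P ↔ c * y = 0)
    (M N : Type u) [AddCommGroup M] [Module R M] [AddCommGroup N] [Module R N] [Module.Finite R N]
    (hv : ∃ n0 : ℕ, ∀ i ≥ n0, Submodule.torsion R (TorM R i M N) = ⊤) (n : ℕ) :
    Subsingleton (Localization.AtPrime P ⊗[R] TorM R (n+1) M N) := by
  let φ := Localization.localRingHom (P.comap (algebraMap Q C)) P (algebraMap Q C) rfl
  have hφ : Surjective φ := RingHom.surjective_localRingHom_of_surjective _ hs P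
  let _ : Algebra (Localization.AtPrime (P.comap (algebraMap Q C))) (Localization.AtPrime P) :=
    φ.toAlgebra
  have : Module.Flat C (Localization.AtPrime P) := IsLocalization.flat _ P.primeCompl
  have : Module.Flat R (Localization.AtPrime P) := Module.Flat.trans R C _
  have : Module.Flat Q (Localization.AtPrime (P.comap (algebraMap Q C))) :=
    IsLocalization.flat _ (P.comap (algebraMap Q C)).primeCompl
  have : IsNoetherianRing (Localization.AtPrime (P.comap (algebraMap Q C))) :=
    IsLocalization.isNoetherianRing (P.comap (algebraMap Q C)).primeCompl _ inferInstance
  refine core (S := Localization.AtPrime (P.comap (algebraMap Q C))) hφ (rs.map (algebraMap Q _))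
    hreg.of_flat ?_ (algebraMap C _ y) ?_ ?_ ?_ M N hv n
  · have hT : Submonoid.map (algebraMap Q C) (P.comap (algebraMap Q C)).primeCompl =
        P.primeCompl := by
      ext c
      constructor
      · rintro ⟨q, hq, rfl⟩
        exact hq
      · intro hc
        obtain ⟨q, rfl⟩ := hs c
        exact ⟨q, hc, rfl⟩
    rw [← Ideal.map_ofList, ← hk]
    exact IsLocalization.ker_map (Localization.AtPrime P) (algebraMap Q C) hT
  · intro s
    obtain ⟨q, t, rfl⟩ := IsLocalization.exists_mk'_eq (P.comap (algebraMap Q C)).primeCompl s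
    rw [IsLocalization.AtPrime.mk'_mem_maximal_iff _ (P.comap (algebraMap Q C))]
    have hu : IsUnit (algebraMap Q (Localization.AtPrime (P.comap (algebraMap Q C))) t) :=
      IsLocalization.map_units _ t
    rw [← hu.smul_eq_zero, ← mul_smul, mul_comm, IsLocalization.mk'_spec, Algebra.smul_def]
    have h1 : algebraMap (Localization.AtPrime (P.comap (algebraMap Q C)))
      (Localization.AtPrime P) (algebraMap Q _ q) = algebraMap C _ (algebraMap Q C q) :=
      Localization.localRingHom_to_map _ _ _ _ _
    rw [h1, ← map_mul, IsLocalization.map_eq_zero_iff P.primeCompl, Ideal.mem_comap]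
    constructor
    · rintro ⟨m, hm⟩
      rw [← mul_assoc, ← hy] at hm
      exact (Ideal.IsPrime.mem_or_mem inferInstance hm).resolve_left m.2
    · intro h
      exact ⟨1, by rw [(hy _).mp h, mul_zero]⟩
  · obtain ⟨g, hg⟩ := gd
    refine ⟨g, fun X Y _ _ _ _ => ?_⟩
    let _ : Module Q X := Module.compHom X
      (algebraMap Q (Localization.AtPrime (P.comap (algebraMap Q C))))
    let _ : Module Q Y := Module.compHom Y
      (algebraMap Q (Localization.AtPrime (P.comap (algebraMap Q C))))
    have : IsScalarTower Q (Localization.AtPrime (P.comap (algebraMap Q C))) X :=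
      IsScalarTower.of_algebraMap_smul fun _ _ => rfl
    have : IsScalarTower Q (Localization.AtPrime (P.comap (algebraMap Q C))) Y :=
      IsScalarTower.of_algebraMap_smul fun _ _ => rfl
    rw [TV_loc (A := Q) (P.comap (algebraMap Q C)).primeCompl]
    exact hg X Y
  · intro r hr
    rw [IsScalarTower.algebraMap_apply R C]
    refine IsLocalization.map_units (M := P.primeCompl) _ ⟨algebraMap R C r, ?_⟩
    intro hP
    have h0 : algebraMap R C r * y = 0 := (hy _).mp hP
    have h1 : IsSMulRegular R r := by
      intro a b hab
      exact (mul_cancel_left_mem_nonZeroDivisors hr).mp hab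
    have h2 : IsSMulRegular C (algebraMap R C r) := h1.of_flat
    have h3 : y = 0 := h2 (by simpa using h0)
    exact Ideal.IsPrime.ne_top (I := P) inferInstance
      ((Ideal.eq_top_iff_one _).mpr ((hy 1).mpr (by rw [h3, mul_zero])))

lemma core3 {R Q C : Type u} [CommRing R] [IsNoetherianRing R] [CommRing Q] [CommRing C]
    [Algebra R C] [Algebra Q C]
    [Module.Flat R C] (hi : Injective (algebraMap R C))
    [IsNoetherianRing Q] (hs : Surjective (algebraMap Q C)) (rs : List Q)
    (hreg : RingTheory.Sequence.IsWeaklyRegular Q rs)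
    (hk : RingHom.ker (algebraMap Q C) = Ideal.ofList rs)
    (gd : ∃ n, ∀ (X Y : Type u) [AddCommGroup X] [Module Q X] [AddCommGroup Y] [Module Q Y],
      TV Q n X Y)
    (M N : Type u) [AddCommGroup M] [Module R M] [AddCommGroup N] [Module R N] [Module.Finite R N]
    (hv : ∃ n0 : ℕ, ∀ i ≥ n0, Submodule.torsion R (TorM R i M N) = ⊤) (n : ℕ) :
    Submodule.torsion R (TorM R (n+1) M N) = ⊤ := by
  have : IsNoetherianRing C := isNoetherianRing_of_surjective Q C _ hs
  rw [eq_top_iff]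
  intro t _
  rw [Submodule.mem_torsion_iff]
  by_contra hcon
  push Not at hcon
  let f : R →ₗ[R] TorM R (n+1) M N := LinearMap.toSpanSingleton R _ t
  let J : Ideal R := LinearMap.ker f
  have hJ : (J : Set R) ⊆ ⋃ p ∈ associatedPrimes R R, (p : Set R) := by
    rw [biUnion_associatedPrimes_eq_compl_nonZeroDivisors]
    intro r hr hr'
    exact hcon ⟨r, hr'⟩ hr
  obtain ⟨p, hp, hJp⟩ := (Ideal.subset_union_prime_finite (associatedPrimes.finite R R)
    (f := fun p => p) ⊤ ⊤ (fun p hp _ _ => hp.1)).mp hJ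
  obtain ⟨hpp, x, hx⟩ := isAssociatedPrime_iff.mp hp
  have hx0 : algebraMap R C x ≠ 0 := by
    intro h
    rw [map_eq_zero_iff _ hi] at h
    apply hpp.ne_top
    rw [Ideal.eq_top_iff_one, hx, Submodule.mem_colon_singleton]
    simp [h]
  obtain ⟨P, hP, hle⟩ := exists_le_isAssociatedPrime_of_isNoetherianRing C _ hx0
  obtain ⟨hPp, y, hy⟩ := isAssociatedPrime_iff.mp hP
  have hsub := core2 hs rs hreg hk gd P y (fun c => by
    rw [hy, Submodule.mem_colon_singleton]; simp) M N hv n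
  have hinj : Injective (J.liftQ f le_rfl) := by
    rw [← LinearMap.ker_eq_bot]
    exact Submodule.ker_liftQ_eq_bot _ _ _ le_rfl
  have : Module.Flat C (Localization.AtPrime P) := IsLocalization.flat _ P.primeCompl
  have : Module.Flat R (Localization.AtPrime P) := Module.Flat.trans R C _
  have hinj2 := Module.Flat.lTensor_preserves_injective_linearMap
    (M := Localization.AtPrime P) _ hinj
  have hs1 : Subsingleton (Localization.AtPrime P ⊗[R] (R ⧸ J)) := hinj2.subsingleton
  have hs2 : Subsingleton (Localization.AtPrime P ⧸
      (J • ⊤ : Submodule R (Localization.AtPrime P))) :=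
    (tensorQuotEquivQuotSMul (Localization.AtPrime P) J).symm.injective.subsingleton
  rw [Submodule.Quotient.subsingleton_iff] at hs2
  have hle2 : (J • ⊤ : Submodule R (Localization.AtPrime P)) ≤
      (IsLocalRing.maximalIdeal (Localization.AtPrime P)).restrictScalars R := by
    rw [Submodule.smul_le]
    intro r hr b _
    rw [Submodule.restrictScalars_mem, Algebra.smul_def]
    apply Ideal.mul_mem_right
    rw [IsScalarTower.algebraMap_apply R C, IsLocalization.AtPrime.to_map_mem_maximal_iff _ P]
    apply hle
    have h1 : r ∈ p := hJp hr
    rw [hx, Submodule.mem_colon_singleton] at h1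
    rw [Submodule.mem_colon_singleton, Submodule.mem_bot, smul_eq_mul, ← map_mul]
    rw [Submodule.mem_bot, smul_eq_mul] at h1
    rw [h1, map_zero]
  have h1 : (1 : Localization.AtPrime P) ∈ IsLocalRing.maximalIdeal (Localization.AtPrime P) :=
    hle2 (by rw [hs2]; trivial)
  exact (Ideal.ne_top_iff_one _).mp (IsLocalRing.maximalIdeal.isMaximal _).ne_top h1

end Final


/-- over a complete intersection, if `Tor_i(M,N)` is torsion for `i ≫ 0` then
it is torsion for all `i ≥ 1`. -/
theorem stmt11 (R : Type u) [CommRing R] (hR : IsCIRing R)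
    (M N : Type u) [AddCommGroup M] [Module R M] [Module.Finite R M]
    [AddCommGroup N] [Module R N] [Module.Finite R N]
    (hv : ∃ n0 : ℕ, ∀ i ≥ n0, Submodule.torsion R (TorM R i M N) = ⊤) :
    ∀ i ≥ 1, Submodule.torsion R (TorM R i M N) = ⊤ := by
  intro i hi
  obtain ⟨n, rfl⟩ : ∃ n, i = n + 1 := ⟨i - 1, by omega⟩
  obtain ⟨_, _, Q, _, hQ, rs, _, hreg, ⟨e⟩⟩ := hR
  have gd := reg_gd hQ
  have : IsNoetherianRing Q := hQ.1
  have hne : Ideal.span (nonunits R) ≠ ⊤ := by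
    have : Ideal.span (nonunits R) ≤ IsLocalRing.maximalIdeal R := by
      rw [Ideal.span_le]
      exact fun x hx => hx
    exact ne_top_of_le_ne_top (IsLocalRing.maximalIdeal.isMaximal R).ne_top this
  have : IsHausdorff (Ideal.span (nonunits R)) R := IsHausdorff.of_isLocalRing _ R hne
  have : Module.Flat R (AdicCompletion (Ideal.span (nonunits R)) R) :=
    AdicCompletion.flat_of_isNoetherian _
  let φ : Q →+* AdicCompletion (Ideal.span (nonunits R)) R :=
    (e : _ →+* _).comp (Ideal.Quotient.mk (Ideal.span {x | x ∈ rs}))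
  let _ : Algebra Q (AdicCompletion (Ideal.span (nonunits R)) R) := φ.toAlgebra
  refine core3 (Q := Q) (C := AdicCompletion (Ideal.span (nonunits R)) R) ?_ ?_ rs hreg ?_ gd
    M N hv n
  · intro a b hab
    rw [AdicCompletion.algebraMap_apply, AdicCompletion.algebraMap_apply] at hab
    exact AdicCompletion.of_injective _ R hab
  · exact e.surjective.comp Ideal.Quotient.mk_surjective
  · change RingHom.ker φ = Ideal.span {x | x ∈ rs}
    ext q
    rw [RingHom.mem_ker]
    change e (Ideal.Quotient.mk _ q) = 0 ↔ _
    rw [map_eq_zero_iff e e.injective, Ideal.Quotient.eq_zero_iff_mem]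

end
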